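/- If f ∈ ℤ[x] is a monic irreducible polynomial of degree n whose discriminant is square-free, then the Galois group of f over ℚ is the full symmetric group S_n. -/

import Mathlib

open Polynomial Finset

/-!
By Minkowski's theorem `ℚ` has no nontrivial unramified extension, so the Galois group of the
splitting field `K` is generated by the inertia groups of the primes of `𝓞 K`. Let `V` be the
Vandermonde matrix of the roots. The Hankel matrix `H = Vᵀ V` of power sums has integer entries and
determinant `D`. If two different pairs of roots were congruent modulo a prime `P` over `p`, then
`V` would have two different pairs of equal rows modulo `P`, so `adj V ≡ 0` and hence `p ∣ adj H`,
which forces `p² ∣ det H = D`. So for square-free `D` at most one pair of roots is congruent modulo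
`P`, and inertia at `P` can only fix all roots or transpose that pair. A transitive group generated
by transpositions is the full symmetric group.
-/

open scoped NumberField

section Matrix

variable {ι R : Type*} [Fintype ι] [DecidableEq ι] [CommRing R]

theorem sq_dvd_det_of_forall_dvd_adjugate [Nonempty ι] [IsDomain R] {p : R} (hp : Prime p)
    {A : Matrix ι ι R} (h : ∀ i j, p ∣ A.adjugate i j) : p ^ 2 ∣ A.det := by
  choose B hB using h
  have hadj : A.adjugate = p • Matrix.of B := by
    ext i j
    simp [hB]
  obtain ⟨k, hk⟩ : ∃ k, Fintype.card ι = k + 1 := Nat.exists_eq_succ_of_ne_zero Fintype.card_ne_zero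
  have hpow : p ^ (k + 1) ∣ A.det ^ k := by
    have hdet := A.det_adjugate
    rw [hadj, Matrix.det_smul, hk, Nat.add_sub_cancel] at hdet
    exact ⟨_, hdet.symm⟩
  obtain ⟨c, hc⟩ : p ∣ A.det := hp.dvd_of_dvd_pow ((dvd_pow_self p k.succ_ne_zero).trans hpow)
  rw [hc, mul_pow, pow_succ, mul_dvd_mul_iff_left (pow_ne_zero k hp.ne_zero)] at hpow
  rw [hc, sq]
  exact mul_dvd_mul_left p (hp.dvd_of_dvd_pow hpow)

theorem adjugate_eq_zero_of_two_row_eq {A : Matrix ι ι R} {a b c d : ι} (hab : a ≠ b)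
    (hcd : c ≠ d) (hne : s(a, b) ≠ s(c, d)) (hAab : A a = A b) (hAcd : A c = A d) :
    A.adjugate = 0 := by
  ext i j
  obtain ⟨x, y, hxy, hxj, hyj, hAxy⟩ : ∃ x y, x ≠ y ∧ x ≠ j ∧ y ≠ j ∧ A x = A y := by
    grind
  rw [Matrix.adjugate_apply, Matrix.zero_apply]
  apply Matrix.det_zero_of_row_eq hxy
  rw [Matrix.updateRow_ne hxj, Matrix.updateRow_ne hyj, hAxy]

end Matrix

section RootDiscr

variable {S T : Type*} [CommRing S] [CommRing T] {n : ℕ}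

/-- The discriminant `∏_{i < j} (ξ i - ξ j)²` of the family `ξ`, that is, of the monic polynomial
with roots `ξ i`. -/
def rootDiscr (ξ : Fin n → S) : S :=
  ∏ ij ∈ univ.filter (fun ij : Fin n × Fin n => ij.1 < ij.2), (ξ ij.1 - ξ ij.2) ^ 2

theorem map_rootDiscr (φ : S →+* T) (ξ : Fin n → S) : φ (rootDiscr ξ) = rootDiscr (φ ∘ ξ) := by
  simp [rootDiscr]

theorem rootDiscr_eq_det_vandermonde_sq (ξ : Fin n → S) :
    rootDiscr ξ = (Matrix.vandermonde ξ).det ^ 2 := by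
  rw [rootDiscr, Matrix.det_vandermonde, prod_filter, ← univ_product_univ, prod_product, ← prod_pow]
  refine prod_congr rfl fun i _ => ?_
  rw [← prod_pow, ← prod_filter, Finset.filter_lt_eq_Ioi]
  exact prod_congr rfl fun j _ => sub_sq_comm _ _

theorem rootDiscr_ne_zero_iff [IsDomain S] {ξ : Fin n → S} :
    rootDiscr ξ ≠ 0 ↔ Function.Injective ξ := by
  rw [rootDiscr_eq_det_vandermonde_sq, pow_ne_zero_iff two_ne_zero,
    Matrix.det_vandermonde_ne_zero_iff]

end RootDiscr

section Factored

variable {R S σ : Type*} [CommRing R] [CommRing S] [Algebra R S] [Fintype σ] {f : R[X]} {η : σ → S}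

theorem aeval_esymm_mem_bot_of_map_eq_prod
    (hη : f.map (algebraMap R S) = ∏ i, (X - C (η i))) {k : ℕ} (hk : k ≤ Fintype.card σ) :
    MvPolynomial.aeval η (MvPolynomial.esymm σ R k) ∈ (⊥ : Subalgebra R S) := by
  have hcoeff := (univ.val.map η).prod_X_sub_C_coeff (k := Fintype.card σ - k) (by simp)
  rw [Multiset.map_map, Multiset.card_map, card_val, card_univ, Nat.sub_sub_self hk] at hcoeff
  change (∏ i, (X - C (η i))).coeff _ = _ at hcoeff
  rw [← hη, coeff_map] at hcoeff
  rw [MvPolynomial.aeval_esymm_eq_multiset_esymm, Algebra.mem_bot]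
  refine ⟨(-1) ^ k * f.coeff (Fintype.card σ - k), ?_⟩
  rw [map_mul, hcoeff, ← mul_assoc]
  simp [← mul_pow]

theorem aeval_mem_bot_of_isSymmetric
    (hη : f.map (algebraMap R S) = ∏ i, (X - C (η i))) {P : MvPolynomial σ R}
    (hP : P.IsSymmetric) : MvPolynomial.aeval η P ∈ (⊥ : Subalgebra R S) := by
  obtain ⟨Q, hQ⟩ := MvPolynomial.esymmAlgHom_surjective R le_rfl ⟨P, hP⟩
  choose r hr using fun i : Fin (Fintype.card σ) =>
    Algebra.mem_bot.mp (aeval_esymm_mem_bot_of_map_eq_prod hη (Nat.succ_le_iff.mpr i.isLt))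
  have hPQ : P = MvPolynomial.aeval
      (fun i : Fin (Fintype.card σ) => MvPolynomial.esymm σ R (i + 1)) Q := by
    rw [← MvPolynomial.esymmAlgHom_apply, hQ]
  refine Algebra.mem_bot.mpr ⟨MvPolynomial.aeval r Q, ?_⟩
  rw [hPQ, MvPolynomial.comp_aeval_apply, ← MvPolynomial.aeval_algebraMap_apply]
  exact congrArg (fun g => MvPolynomial.aeval g Q) (funext hr)

theorem exists_map_eq_vandermonde_transpose_mul_vandermonde {n : ℕ} {η : Fin n → S}
    (hη : f.map (algebraMap R S) = ∏ i, (X - C (η i))) :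
    ∃ H : Matrix (Fin n) (Fin n) R, H.map (algebraMap R S) =
      (Matrix.vandermonde η).transpose * Matrix.vandermonde η := by
  choose H hH using fun i j : Fin n => Algebra.mem_bot.mp
    (aeval_mem_bot_of_isSymmetric hη (MvPolynomial.psum_isSymmetric (Fin n) R (i + j)))
  refine ⟨Matrix.of H, ?_⟩
  ext i j
  rw [Matrix.map_apply, Matrix.of_apply, hH, Matrix.vandermonde_transpose_mul_vandermonde]
  simp [MvPolynomial.psum]

theorem rootSet_eq_range_of_map_eq_prod [IsDomain S]
    (hη : f.map (algebraMap R S) = ∏ i, (X - C (η i))) :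
    f.rootSet S = Set.range η := by
  ext x
  rw [mem_rootSet', ← eval_map_algebraMap, hη, eval_prod, prod_eq_zero_iff]
  simp [(monic_prod_X_sub_C η univ).ne_zero, sub_eq_zero, eq_comm]

end Factored

section Collision

variable {R S : Type*} [CommRing R] [IsDomain R] [CommRing S] [Algebra R S] [FaithfulSMul R S]
  {f : R[X]} {n : ℕ} {η : Fin n → S} {D : R} {P : Ideal S} {a b c d : Fin n}

theorem sq_dvd_of_algebraMap_eq_rootDiscr_of_two_collisions
    (hη : f.map (algebraMap R S) = ∏ i, (X - C (η i))) (hD : algebraMap R S D = rootDiscr η)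
    {p : R} (hp : Prime p) (hP : P.under R ≤ Ideal.span {p})
    (hab : a ≠ b) (hcd : c ≠ d) (hne : s(a, b) ≠ s(c, d))
    (hηab : Ideal.Quotient.mk P (η a) = Ideal.Quotient.mk P (η b))
    (hηcd : Ideal.Quotient.mk P (η c) = Ideal.Quotient.mk P (η d)) : p ^ 2 ∣ D := by
  obtain ⟨H, hH⟩ := exists_map_eq_vandermonde_transpose_mul_vandermonde hη
  have hdet : H.det = D := by
    apply FaithfulSMul.algebraMap_injective R S
    rw [RingHom.map_det, RingHom.mapMatrix_apply, hH, Matrix.det_mul, Matrix.det_transpose, ← sq,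
      ← rootDiscr_eq_det_vandermonde_sq, hD]
  have hadj : (Matrix.vandermonde (Ideal.Quotient.mk P ∘ η)).adjugate = 0 :=
    adjugate_eq_zero_of_two_row_eq hab hcd hne
      (by ext; simp [Matrix.vandermonde_apply, hηab])
      (by ext; simp [Matrix.vandermonde_apply, hηcd])
  have hV : (Matrix.vandermonde η).map (Ideal.Quotient.mk P) =
      Matrix.vandermonde (Ideal.Quotient.mk P ∘ η) := by
    ext; simp [Matrix.vandermonde_apply]
  have hadjH : (H.map (algebraMap R S)).adjugate.map (Ideal.Quotient.mk P) = 0 := by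
    rw [hH, Matrix.adjugate_mul_distrib, Matrix.map_mul, ← RingHom.mapMatrix_apply,
      RingHom.map_adjugate, RingHom.mapMatrix_apply, hV, hadj, Matrix.zero_mul]
  rw [← hdet]
  have : Nonempty (Fin n) := ⟨a⟩
  refine sq_dvd_det_of_forall_dvd_adjugate hp fun i j => Ideal.mem_span_singleton.mp (hP ?_)
  rw [Ideal.under, Ideal.mem_comap, ← Ideal.Quotient.eq_zero_iff_mem]
  have hadjH_apply := congrFun₂ hadjH i j
  rwa [← RingHom.mapMatrix_apply (f := algebraMap R S), ← RingHom.map_adjugate] at hadjH_apply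

theorem ncard_rootSet_le_ncard_rootSet_quotient_add_one [IsPrincipalIdealRing R] [IsDomain S]
    (hη : f.map (algebraMap R S) = ∏ i, (X - C (η i))) (hD : algebraMap R S D = rootDiscr η)
    (hsq : Squarefree D) [P.IsPrime] (hP : P.under R ≠ ⊥) :
    (f.rootSet S).ncard ≤ (f.rootSet (S ⧸ P)).ncard + 1 := by
  have hsplits : (f.map (algebraMap R S)).Splits := hη ▸ Splits.prod fun i _ => Splits.X_sub_C _
  have hmap : f.map (algebraMap R (S ⧸ P)) ≠ 0 := by
    rw [IsScalarTower.algebraMap_eq R S (S ⧸ P), ← Polynomial.map_map, hη]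
    exact ((monic_prod_X_sub_C η univ).map _).ne_zero
  rw [← hsplits.image_rootSet_of_map_ne_zero (Ideal.Quotient.mkₐ R P) hmap,
    Set.ncard_le_ncard_image_add_one_iff, rootSet_eq_range_of_map_eq_prod hη]
  rintro _ ⟨a, rfl⟩ _ ⟨b, rfl⟩ _ ⟨c, rfl⟩ _ ⟨d, rfl⟩ hηab hηcd hab hcd
  by_contra hne
  have hp := Submodule.IsPrincipal.prime_generator_of_isPrime (P.under R) hP
  refine hp.not_isUnit (hsq _ ?_)
  rw [← sq]
  refine sq_dvd_of_algebraMap_eq_rootDiscr_of_two_collisions hη hD hp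
    (Ideal.span_singleton_generator _).ge
    (ne_of_apply_ne η hab) (ne_of_apply_ne η hcd) (fun h => hne ?_) hηab hηcd
  rcases Sym2.eq_iff.mp h with ⟨rfl, rfl⟩ | ⟨rfl, rfl⟩
  · rfl
  · exact Set.pair_comm _ _

end Collision

section Inertia

variable {R S T G : Type*} [CommRing R] [CommRing S] [CommRing T] [IsDomain R] [IsDomain S]
  [IsDomain T] [Algebra R S] [Algebra R T] [Algebra S T] [Group G] [Finite G]
  [MulSemiringAction G T] [IsGaloisGroup G R T] [Module.Finite R T] [Module.Flat R T]
  (Q : Ideal T) [Q.IsPrime] [PerfectField (Q.under R).ResidueField]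

theorem card_inertia_eq_ramificationIdx : Nat.card (Q.inertia G) = Q.ramificationIdx R := by
  rw [Ideal.card_inertia_eq_ramificationIdxIn (Q.under R) Q,
    Ideal.ramificationIdxIn_eq_ramificationIdx _ Q G]

theorem ramificationIdx_under_eq_one_of_inertia_le [IsScalarTower R S T] [Module.Finite S T]
    [Module.Flat S T] {N : Subgroup G} [IsGaloisGroup N S T]
    [PerfectField (Q.under S).ResidueField] (hN : Q.inertia G ≤ N) :
    (Q.under S).ramificationIdx R = 1 := by
  have hcard : Nat.card (Q.inertia N) = Nat.card (Q.inertia G) :=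
    Nat.card_congr (Subgroup.subgroupOfEquivOfLe hN).toEquiv
  have htower := Ideal.ramificationIdx_tower (R := R) (Q.under S) Q
  rw [← card_inertia_eq_ramificationIdx (R := R) (G := G) Q,
    ← card_inertia_eq_ramificationIdx (R := S) (G := N) Q, hcard] at htower
  exact (Nat.eq_of_mul_eq_mul_right Nat.card_pos (by rwa [one_mul])).symm

end Inertia

theorem iSup_inertia_eq_top (K G : Type*) [Field K] [NumberField K] [Group G] [Finite G]
    [MulSemiringAction G K] [IsGaloisGroup G ℚ K] :
    ⨆ m : MaximalSpectrum (𝓞 K), m.asIdeal.inertia G = ⊤ := by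
  set N : Subgroup G := ⨆ m : MaximalSpectrum (𝓞 K), m.asIdeal.inertia G
  let F : IntermediateField ℚ K := FixedPoints.intermediateField N
  have : IsGaloisGroup G ℤ (𝓞 K) := .of_isFractionRing G ℤ (𝓞 K) ℚ K
  have : IsGaloisGroup N (𝓞 F) (𝓞 K) := .of_isFractionRing N (𝓞 F) (𝓞 K) F K
  have hfinrank : Module.finrank ℚ F = 1 := by
    by_contra hF
    obtain ⟨P, hP, hram⟩ := NumberField.exists_not_isUnramifiedAt_int (𝒪 := 𝓞 F) hF
    obtain ⟨Q, hQ, hQP⟩ := Ideal.exists_maximal_ideal_liesOver_of_isIntegral (S := 𝓞 K) P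
    obtain rfl : P = Q.under (𝓞 F) := hQP.over
    have hQN : Q.inertia G ≤ N :=
      le_iSup (fun m : MaximalSpectrum (𝓞 K) => m.asIdeal.inertia G) ⟨Q, hQ⟩
    exact hram (Ideal.ramificationIdx_eq_one_iff.mp
      (ramificationIdx_under_eq_one_of_inertia_le Q hQN))
  rw [← IsGaloisGroup.fixingSubgroup_fixedPoints G ℚ K (H := N)]
  change fixingSubgroup G (F : Set K) = ⊤
  rw [IntermediateField.finrank_eq_one_iff.mp hfinrank, IsGaloisGroup.fixingSubgroup_bot]

section RootSetAction

variable {A B : Type*} [CommRing A] [IsDomain A] [IsIntegrallyClosed A] [CommRing B] [IsDomain B]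
  [Algebra A B] [FaithfulSMul A B] (G : Type*) [Group G] [Finite G] [MulSemiringAction G B]
  [Algebra.IsInvariant A B G]

theorem exists_smul_eq_of_aeval_minpoly_eq_zero {x y : B} (hy : aeval y (minpoly A x) = 0) :
    ∃ g : G, g • x = y := by
  have := Fintype.ofFinite G
  have : Algebra.IsIntegral A B := Algebra.IsInvariant.isIntegral A B G
  obtain ⟨P, hP⟩ := (mem_lifts _).mp (Algebra.IsInvariant.charpoly_mem_lifts A B G x)
  have hPx : aeval x P = 0 := by
    rw [← eval_map_algebraMap, hP, MulSemiringAction.eval_charpoly]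
  have hPy : aeval y P = 0 := aeval_eq_zero_of_dvd_aeval_eq_zero
    (minpoly.isIntegrallyClosed_dvd (Algebra.IsIntegral.isIntegral x) hPx) hy
  rw [← eval_map_algebraMap, hP, MulSemiringAction.charpoly_eq, eval_prod, prod_eq_zero_iff] at hPy
  obtain ⟨g, -, hg⟩ := hPy
  exact ⟨g, by simpa [sub_eq_zero, eq_comm] using hg⟩

theorem isPretransitive_rootSet_of_irreducible [SMulCommClass G A B] {f : A[X]}
    (hf : Irreducible f) : MulAction.IsPretransitive G (f.rootSet B) := by
  have : Algebra.IsIntegral A B := Algebra.IsInvariant.isIntegral A B G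
  refine ⟨fun x y => ?_⟩
  have hx : IsIntegral A (x : B) := Algebra.IsIntegral.isIntegral _
  have hassoc : Associated (minpoly A (x : B)) f :=
    (minpoly.irreducible hx).associated_of_dvd hf
      (minpoly.isIntegrallyClosed_dvd hx (aeval_eq_zero_of_mem_rootSet x.2))
  obtain ⟨g, hg⟩ := exists_smul_eq_of_aeval_minpoly_eq_zero G
    (aeval_eq_zero_of_dvd_aeval_eq_zero hassoc.symm.dvd (aeval_eq_zero_of_mem_rootSet y.2))
  exact ⟨g, Subtype.ext hg⟩

theorem faithfulSMul_rootSet (K G : Type*) [Field K] [CharZero K] [Group G]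
    [MulSemiringAction G K] [FaithfulSMul G K] [SMulCommClass G ℚ K] [SMulCommClass G ℤ (𝓞 K)]
    {f : ℤ[X]} (hf : f.Monic) [IsSplittingField ℚ K (f.map (algebraMap ℤ ℚ))] :
    FaithfulSMul G (f.rootSet (𝓞 K)) := by
  refine ⟨fun {g h} hgh => ?_⟩
  have heq : MulSemiringAction.toAlgHom ℚ K g = MulSemiringAction.toAlgHom ℚ K h := by
    refine AlgHom.ext_of_adjoin_eq_top
      (IsSplittingField.adjoin_rootSet K (f.map (algebraMap ℤ ℚ))) fun x hx => ?_
    have hfx : aeval x f = 0 := by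
      rw [← aeval_map_algebraMap ℚ]
      exact (mem_rootSet'.mp hx).2
    let y : 𝓞 K := ⟨x, f, hf, hfx⟩
    have hy : aeval y f = 0 := by
      apply FaithfulSMul.algebraMap_injective (𝓞 K) K
      rwa [← aeval_algebraMap_apply, map_zero]
    exact congrArg (fun z : f.rootSet (𝓞 K) => ((z : 𝓞 K) : K))
      (hgh ⟨y, mem_rootSet.mpr ⟨hf.ne_zero, hy⟩⟩)
  exact FaithfulSMul.eq_of_smul_eq_smul (DFunLike.congr_fun heq)

end RootSetAction

section Lift

variable {R B K L σ : Type*} [CommRing R] [CommRing B] [Field K] [CommRing L] [IsDomain L]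
  [Algebra R B] [Algebra R K] [Algebra R L] [Algebra B K] [IsScalarTower R B K]
  [IsIntegralClosure B R K] [Fintype σ] {f : R[X]}

theorem exists_map_eq_prod_of_isIntegralClosure (hf : f.Monic)
    (hsplits : (f.map (algebraMap R K)).Splits) (φ : K →ₐ[R] L) {ξ : σ → L}
    (hξ : f.map (algebraMap R L) = ∏ i, (X - C (ξ i))) :
    ∃ η : σ → B, φ ∘ algebraMap B K ∘ η = ξ ∧ f.map (algebraMap R B) = ∏ i, (X - C (η i)) := by
  have hroot (i : σ) : aeval (ξ i) f = 0 := by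
    rw [← eval_map_algebraMap, hξ, eval_prod]
    exact prod_eq_zero (mem_univ i) (by simp)
  have hmap : (f.map (algebraMap R K)).map (φ : K →+* L) = f.map (algebraMap R L) := by
    rw [Polynomial.map_map, φ.comp_algebraMap]
  have hlift (i : σ) : ∃ y : B, φ (algebraMap B K y) = ξ i := by
    obtain ⟨x, hx⟩ : ξ i ∈ (φ : K →+* L).range :=
      hsplits.mem_range_of_isRoot (hf.map _).ne_zero
        (by rw [hmap, IsRoot.def, eval_map_algebraMap, hroot])
    have hfx : aeval x f = 0 := by
      apply RingHom.injective (φ : K →+* L)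
      rw [RingHom.coe_coe, ← aeval_algHom_apply, map_zero]
      exact hx ▸ hroot i
    obtain ⟨y, rfl⟩ := IsIntegralClosure.isIntegral_iff (A := B).mp ⟨f, hf, hfx⟩
    exact ⟨y, hx⟩
  choose η hη using hlift
  refine ⟨η, funext hη, ?_⟩
  apply Polynomial.map_injective ((φ : K →+* L).comp (algebraMap B K))
    ((φ : K →+* L).injective.comp (IsIntegralClosure.algebraMap_injective B R K))
  rw [Polynomial.map_map, RingHom.comp_assoc, ← IsScalarTower.algebraMap_eq, φ.comp_algebraMap, hξ,
    Polynomial.map_prod]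
  simp [hη]

end Lift

section SymmetricGroup

variable {f : ℤ[X]} {n : ℕ} {D : ℤ}

theorem nonempty_mulEquiv_perm_of_squarefree_rootDiscr {K : Type*} [Field K] [NumberField K]
    [IsSplittingField ℚ K (f.map (algebraMap ℤ ℚ))] {G : Type*} [Group G] [Finite G]
    [MulSemiringAction G K] [IsGaloisGroup G ℚ K] {η : Fin n → 𝓞 K} (hf : f.Monic)
    (hirr : Irreducible f) (hη : f.map (algebraMap ℤ (𝓞 K)) = ∏ i, (X - C (η i)))
    (hD : (D : 𝓞 K) = rootDiscr η) (hsq : Squarefree D) :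
    Nonempty (G ≃* Equiv.Perm (Fin n)) := by
  have hG : IsGaloisGroup G ℤ (𝓞 K) := .of_isFractionRing G ℤ (𝓞 K) ℚ K
  have hsplits : (f.map (algebraMap ℤ (𝓞 K))).Splits := hη ▸ Splits.prod fun i _ => .X_sub_C _
  have hη_inj : Function.Injective η :=
    rootDiscr_ne_zero_iff.mp (hD ▸ Int.cast_ne_zero.mpr hsq.ne_zero)
  have : MulAction.IsPretransitive G (f.rootSet (𝓞 K)) :=
    isPretransitive_rootSet_of_irreducible G hirr
  have : FaithfulSMul G K := IsGaloisGroup.faithful ℚ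
  have : FaithfulSMul G (f.rootSet (𝓞 K)) := faithfulSMul_rootSet K G hf
  have hsurj : Function.Surjective (MulAction.toPermHom G (f.rootSet (𝓞 K))) :=
    hsplits.surjective_toPermHom_of_iSup_inertia_eq_top
      (fun m => ncard_rootSet_le_ncard_rootSet_quotient_add_one hη hD hsq
        (mt Ideal.eq_bot_of_comap_eq_bot m.isMaximal.ne_bot_of_isIntegral_int))
      (iSup_inertia_eq_top K G)
  let e : Fin n ≃ f.rootSet (𝓞 K) := (Equiv.ofInjective η hη_inj).trans
    (Equiv.setCongr (rootSet_eq_range_of_map_eq_prod hη).symm)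
  exact ⟨(MulEquiv.ofBijective _ ⟨MulAction.toPerm_injective, hsurj⟩).trans e.symm.permCongrHom⟩

theorem stmt_17_general {L : Type*} [Field L] [CharZero L] {ξ : Fin n → L} (hmonic : f.Monic)
    (hirr : Irreducible f) (hroots : f.map (algebraMap ℤ L) = ∏ i, (X - C (ξ i)))
    (hD : (D : L) = rootDiscr ξ) (hsqfree : Squarefree D) :
    Nonempty ((f.map (algebraMap ℤ ℚ)).Gal ≃* Equiv.Perm (Fin n)) := by
  suffices h : ∀ (K : Type) [Field K] [Algebra ℚ K]
      [IsSplittingField ℚ K (f.map (algebraMap ℤ ℚ))],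
      Nonempty (Gal(K/ℚ) ≃* Equiv.Perm (Fin n)) from
    @h _ _ _ (IsSplittingField.splittingField _)
  intro K _ hK _
  have : CharZero K := algebraRat.charZero K
  -- The `ℚ`-algebra structure of `SplittingField` is not defeq to the one used for `𝓞 K`.
  obtain rfl : hK = DivisionRing.toRatAlgebra := Subsingleton.elim _ _
  have : NumberField K :=
    { to_finiteDimensional := IsSplittingField.finiteDimensional K (f.map (algebraMap ℤ ℚ)) }
  have : IsGalois ℚ K := { to_normal := .of_isSplittingField (f.map (algebraMap ℤ ℚ)) }
  have hsplitsK : (f.map (algebraMap ℤ K)).Splits := by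
    rw [IsScalarTower.algebraMap_eq ℤ ℚ K, ← Polynomial.map_map]
    exact IsSplittingField.splits K _
  have hsplitsL : ((f.map (algebraMap ℤ ℚ)).map (algebraMap ℚ L)).Splits := by
    rw [Polynomial.map_map, ← IsScalarTower.algebraMap_eq, hroots]
    exact Splits.prod fun i _ => .X_sub_C _
  let φ : K →ₐ[ℤ] L := (IsSplittingField.lift K _ hsplitsL).restrictScalars ℤ
  obtain ⟨η, hηξ, hη⟩ := exists_map_eq_prod_of_isIntegralClosure (B := 𝓞 K) hmonic hsplitsK φ hroots
  let ψ : 𝓞 K →+* L := (φ : K →+* L).comp (algebraMap (𝓞 K) K)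
  have hψ : Function.Injective ψ :=
    (φ : K →+* L).injective.comp (FaithfulSMul.algebraMap_injective (𝓞 K) K)
  have hψη : ψ ∘ η = ξ := hηξ
  have hDη : (D : 𝓞 K) = rootDiscr η := hψ (by rw [map_intCast, map_rootDiscr, hψη, hD])
  exact nonempty_mulEquiv_perm_of_squarefree_rootDiscr hmonic hirr hη hDη hsqfree

end SymmetricGroup

/-- If `f ∈ ℤ[x]` is a monic irreducible polynomial of degree `n` whose discriminant
`D = ∏_{i<j}(ξ_i − ξ_j)²` (an integer, computed from the roots `ξ` of `f` in `ℂ`) is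
square-free, then the Galois group of `f` over `ℚ` is the full symmetric group `Sₙ`. -/
theorem stmt_17 (f : Polynomial ℤ) (hmonic : f.Monic) (hirr : Irreducible f)
    (n : ℕ) (hn : n = f.natDegree) (ξ : Fin n → ℂ)
    (hroots : f.map (algebraMap ℤ ℂ) = ∏ i, (X - C (ξ i)))
    (D : ℤ)
    (hD : (D : ℂ) = ∏ ij ∈ Finset.univ.filter (fun ij : Fin n × Fin n => ij.1 < ij.2),
      (ξ ij.1 - ξ ij.2) ^ 2)
    (hsqfree : Squarefree D) :
    Nonempty ((f.map (algebraMap ℤ ℚ)).Gal ≃* Equiv.Perm (Fin n)) :=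
  stmt_17_general hmonic hirr hroots hD hsqfree
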